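/- Let q be a real stable polynomial in the variables z₁,…,z_n whose degree in the variable z_i is at most 2, let z ∈ ℝ^n be above the roots of q, and suppose Φ_q^i(z) > 0. Set δ := 1/(2Φ_q^i(z)). Then z − δe_i is above the roots of ∂_i q (where e_i is the i-th standard basis vector), and for every j ∈ {1,…,n}: Φ_{∂_i q}^j(z − δe_i) ≤ Φ_q^j(z). -/

import Mathlib

open Polynomial

/-- A polynomial with real coefficients is real stable if it has no zero all of whose
coordinates have strictly positive imaginary part. -/
def RealStable {n : ℕ} (p : MvPolynomial (Fin n) ℝ) : Prop :=
  ∀ z : Fin n → ℂ, (∀ k, 0 < (z k).im) → MvPolynomial.aeval z p ≠ 0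

/-- `z ∈ ℝ^n` is above the roots of `p` if `p` does not vanish on the nonnegative orthant
based at `z`. -/
def AboveRoots {n : ℕ} (p : MvPolynomial (Fin n) ℝ) (z : Fin n → ℝ) : Prop :=
  ∀ t : Fin n → ℝ, (∀ k, 0 ≤ t k) → MvPolynomial.eval (z + t) p ≠ 0

/-- The barrier function `Φ_p^i(z) = (∂ᵢp)(z)/p(z)`. -/
noncomputable def Phi {n : ℕ} (p : MvPolynomial (Fin n) ℝ) (i : Fin n) (z : Fin n → ℝ) : ℝ :=
  MvPolynomial.eval z (MvPolynomial.pderiv i p) / MvPolynomial.eval z p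


noncomputable def Ln {n : ℕ} {K : Type*} [Field K] [Algebra ℝ K] (a b : Fin n → K)
    (p : MvPolynomial (Fin n) ℝ) : K[X] :=
  MvPolynomial.aeval (fun k => C (a k) + C (b k) * X) p

theorem Ln_eval {n : ℕ} {K : Type*} [Field K] [Algebra ℝ K] (a b : Fin n → K)
    (p : MvPolynomial (Fin n) ℝ) (s : K) :
    (Ln a b p).eval s = MvPolynomial.aeval (fun k => a k + b k * s) p := by
  unfold Ln
  induction p using MvPolynomial.induction_on with
  | C r => simp
  | add p q hp hq => simp [hp, hq]
  | mul_X p k hp => simp [hp]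

theorem Ln_deriv {n : ℕ} {K : Type*} [Field K] [Algebra ℝ K] (a b : Fin n → K)
    (p : MvPolynomial (Fin n) ℝ) :
    derivative (Ln a b p) = ∑ k, C (b k) * Ln a b (MvPolynomial.pderiv k p) := by
  induction p using MvPolynomial.induction_on with
  | C r => simp [Ln]
  | add p q hp hq =>
    have : Ln a b (p + q) = Ln a b p + Ln a b q := by simp [Ln]
    simp only [this, hp, hq, map_add, ← Finset.sum_add_distrib]
    refine Finset.sum_congr rfl fun k _ => ?_
    simp [Ln]; ring
  | mul_X p j hp =>
    have h1 : Ln a b (p * MvPolynomial.X j) = Ln a b p * (C (a j) + C (b j) * X) := by simp [Ln]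
    have h2 : ∀ k, C (b k) * Ln a b (MvPolynomial.pderiv k (p * MvPolynomial.X j)) =
        (C (b k) * Ln a b (MvPolynomial.pderiv k p)) * (C (a j) + C (b j) * X) +
        (if k = j then C (b j) * Ln a b p else 0) := by
      intro k
      by_cases hk : k = j
      · subst hk; simp [Ln, MvPolynomial.pderiv_X]; ring
      · have : (Pi.single k (1 : MvPolynomial (Fin n) ℝ) : Fin n → _) j = 0 := by
          simp [Ne.symm hk]
        simp [Ln, hk, MvPolynomial.pderiv_X, Ne.symm hk]; ring
    rw [h1, derivative_mul, hp, Finset.sum_congr rfl (fun k _ => h2 k), Finset.sum_add_distrib,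
      ← Finset.sum_mul]
    simp
    ring

theorem Ln_natDegree {n : ℕ} {K : Type*} [Field K] [Algebra ℝ K] (a : Fin n → K) (i : Fin n)
    (p : MvPolynomial (Fin n) ℝ) :
    (Ln a (Pi.single i 1) p).natDegree ≤ MvPolynomial.degreeOf i p := by
  unfold Ln
  rw [MvPolynomial.aeval_def, MvPolynomial.eval₂_eq']
  refine natDegree_sum_le_of_forall_le _ _ fun s hs => ?_
  refine le_trans ?_ (MvPolynomial.monomial_le_degreeOf i hs)
  rw [Polynomial.algebraMap_apply]
  refine (natDegree_C_mul_le _ _).trans ((natDegree_prod_le _ _).trans ?_)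
  have : ∀ k ∈ Finset.univ, natDegree ((C (a k) + C ((Pi.single i 1 : Fin n → K) k) * X) ^ s k)
      ≤ if k = i then s i else 0 := by
    intro k _
    by_cases hk : k = i
    · subst hk
      simp only [if_true]
      refine natDegree_pow_le.trans ?_
      have : natDegree (C (a k) + C ((Pi.single k 1 : Fin n → K) k) * X) ≤ 1 := by
        compute_degree
      nlinarith
    · simp [hk]
  refine (Finset.sum_le_sum this).trans ?_
  simp

theorem pd_comm {n : ℕ} (i j : Fin n) (p : MvPolynomial (Fin n) ℝ) :
    MvPolynomial.pderiv i (MvPolynomial.pderiv j p) =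
    MvPolynomial.pderiv j (MvPolynomial.pderiv i p) := by
  have : ⁅MvPolynomial.pderiv (R := ℝ) i, MvPolynomial.pderiv (R := ℝ) j⁆ = 0 := by
    apply MvPolynomial.derivation_ext
    intro k
    simp [Derivation.commutator_apply, MvPolynomial.pderiv_X, Pi.single_apply]
    split_ifs <;> simp
  have h := congrArg (fun D => D p) this
  simpa [Derivation.commutator_apply, sub_eq_zero] using h

theorem Ln_single_deriv {n : ℕ} {K : Type*} [Field K] [Algebra ℝ K] (a : Fin n → K) (i : Fin n)
    (p : MvPolynomial (Fin n) ℝ) :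
    derivative (Ln a (Pi.single i 1) p) = Ln a (Pi.single i 1) (MvPolynomial.pderiv i p) := by
  rw [Ln_deriv, Finset.sum_eq_single i]
  · simp
  · intro k _ hk; simp [hk]
  · simp

theorem pd3 {n : ℕ} (i : Fin n) (p : MvPolynomial (Fin n) ℝ)
    (h : MvPolynomial.degreeOf i p ≤ 2) :
    MvPolynomial.pderiv i (MvPolynomial.pderiv i (MvPolynomial.pderiv i p)) = 0 := by
  apply MvPolynomial.funext
  intro x
  have h1 : (Ln x (Pi.single i 1) (MvPolynomial.pderiv i (MvPolynomial.pderiv i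
      (MvPolynomial.pderiv i p)))) = 0 := by
    rw [← Ln_single_deriv, ← Ln_single_deriv, ← Ln_single_deriv]
    have := iterate_derivative_eq_zero (p := Ln x (Pi.single i 1) p) (x := 3)
      (lt_of_le_of_lt (Ln_natDegree x i p) (by omega))
    simpa using this
  have h2 := Ln_eval x (Pi.single i 1) (MvPolynomial.pderiv i (MvPolynomial.pderiv i
      (MvPolynomial.pderiv i p))) 0
  rw [h1] at h2
  simpa [MvPolynomial.aeval_eq_eval] using h2.symm

theorem taylor2 {n : ℕ} (i : Fin n) (p : MvPolynomial (Fin n) ℝ)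
    (h : MvPolynomial.pderiv i (MvPolynomial.pderiv i (MvPolynomial.pderiv i p)) = 0)
    (w : Fin n → ℝ) (x : ℝ) :
    MvPolynomial.eval (w + Pi.single i x) p = MvPolynomial.eval w p
      + x * MvPolynomial.eval w (MvPolynomial.pderiv i p)
      + x ^ 2 / 2 * MvPolynomial.eval w (MvPolynomial.pderiv i (MvPolynomial.pderiv i p)) := by
  have key : ∀ (r : MvPolynomial (Fin n) ℝ) (s : ℝ), (Ln w (Pi.single i 1) r).eval s =
      MvPolynomial.eval (w + Pi.single i s) r := by
    intro r s
    rw [Ln_eval, MvPolynomial.aeval_eq_eval]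
    have : (fun k => w k + (Pi.single i 1 : Fin n → ℝ) k * s) = w + Pi.single i s := by
      ext k; by_cases hk : k = i
      · subst hk; simp
      · simp [hk]
    rw [this]
  have key0 : ∀ r : MvPolynomial (Fin n) ℝ, (Ln w (Pi.single i 1) r).coeff 0 =
      MvPolynomial.eval w r := by
    intro r
    rw [coeff_zero_eq_eval_zero, key]; simp
  set U := Ln w (Pi.single i 1) p with hU
  have d1 := Ln_single_deriv w i p
  have d2 := Ln_single_deriv w i (MvPolynomial.pderiv i p)
  have d3 := Ln_single_deriv w i (MvPolynomial.pderiv i (MvPolynomial.pderiv i p))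
  rw [h] at d3
  have hz : Ln w (Pi.single i 1) (0 : MvPolynomial (Fin n) ℝ) = 0 := by simp [Ln]
  rw [hz, ← d2, ← d1] at d3
  have hd : U.natDegree ≤ 2 := by
    rw [natDegree_le_iff_coeff_eq_zero]
    intro N hN
    obtain ⟨m, rfl⟩ : ∃ m, N = m + 3 := ⟨N - 3, by omega⟩
    have := congrArg (fun u => coeff u m) d3
    simp only [coeff_derivative, coeff_zero] at this
    have e1 : ((m:ℝ) + 1) ≠ 0 := by positivity
    have e2 : (((m + 1 : ℕ):ℝ) + 1) ≠ 0 := by positivity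
    have e3 : (((m + 1 + 1 : ℕ):ℝ) + 1) ≠ 0 := by positivity
    have t := (mul_eq_zero.mp this).resolve_right e1
    have t := (mul_eq_zero.mp t).resolve_right e2
    exact (mul_eq_zero.mp t).resolve_right e3
  have c0 := key0 p
  have c1 := key0 (MvPolynomial.pderiv i p)
  have c2 := key0 (MvPolynomial.pderiv i (MvPolynomial.pderiv i p))
  rw [← d1, coeff_derivative] at c1
  rw [← d2, ← d1, coeff_derivative, coeff_derivative] at c2
  rw [← c0, ← c1, ← c2, ← key, ← hU, eval_eq_sum_range' (Nat.lt_succ_of_le hd)]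
  simp [Finset.sum_range_succ]
  ring

/-- the imaginary part of the log-derivative is nonpositive -/
theorem im_le {n : ℕ} (q : MvPolynomial (Fin n) ℝ)
    (hq : ∀ z : Fin n → ℂ, (∀ k, 0 < (z k).im) → MvPolynomial.aeval z q ≠ 0)
    (j : Fin n) (w : Fin n → ℂ) (hw : ∀ k, 0 < (w k).im) :
    (MvPolynomial.aeval w (MvPolynomial.pderiv j q) *
      (starRingEnd ℂ) (MvPolynomial.aeval w q)).im ≤ 0 := by
  set U := Ln w (Pi.single j 1) q with hU
  have key : ∀ (r : MvPolynomial (Fin n) ℝ), (Ln w (Pi.single j 1) r).eval 0 =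
      MvPolynomial.aeval w r := by
    intro r
    rw [Ln_eval]; simp
  have d1 := Ln_single_deriv w j q
  have hroot : ∀ s : ℂ, 0 ≤ s.im → U.eval s ≠ 0 := by
    intro s hs
    rw [hU, Ln_eval]
    apply hq
    intro k
    by_cases hk : k = j
    · subst hk; simp; linarith [hw k]
    · simpa [hk] using hw k
  have h0 := hroot 0 (by simp)
  have hdiv := (IsAlgClosed.splits U).eval_derivative_div_eval_of_ne_zero h0
  have him : (U.derivative.eval 0 / U.eval 0).im ≤ 0 := by
    rw [hdiv]
    rw [← Complex.coe_imAddGroupHom, map_multiset_sum]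
    rw [← neg_nonneg, ← Multiset.sum_map_neg']
    apply Multiset.sum_nonneg
    intro x hx
    simp only [Multiset.mem_map] at hx
    obtain ⟨_, ⟨_, ⟨r, hr, rfl⟩, rfl⟩, rfl⟩ := hx
    rw [neg_nonneg]
    have hr' : r.im < 0 := by
      by_contra hcon
      exact hroot r (not_lt.mp hcon) (mem_roots'.mp hr).2
    simp only [Complex.coe_imAddGroupHom, zero_sub, one_div, Complex.inv_im]
    apply div_nonpos_of_nonpos_of_nonneg
    · simp; linarith
    · exact Complex.normSq_nonneg _
  rw [hU, d1, key, key] at him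
  rw [hU, key] at h0
  generalize MvPolynomial.aeval w (MvPolynomial.pderiv j q) = u at *
  generalize MvPolynomial.aeval w q = v at *
  have hv : 0 < Complex.normSq v := Complex.normSq_pos.mpr h0
  have : u * (starRingEnd ℂ) v = (u / v) * (Complex.normSq v : ℂ) := by
    rw [← Complex.mul_conj]; field_simp
  rw [this, Complex.im_mul_ofReal]
  exact mul_nonpos_of_nonpos_of_nonneg him hv.le

theorem aeval_ofReal' {n : ℕ} (p : MvPolynomial (Fin n) ℝ) (z : Fin n → ℝ) :
    MvPolynomial.aeval (fun k => (z k : ℂ)) p = ((MvPolynomial.eval z p : ℝ) : ℂ) := by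
  induction p using MvPolynomial.induction_on with
  | C r => simp
  | add p q hp hq => simp [hp, hq]
  | mul_X p k hp => simp [hp]

theorem rayleigh_pos {n : ℕ} (q : MvPolynomial (Fin n) ℝ)
    (hq : ∀ z : Fin n → ℂ, (∀ k, 0 < (z k).im) → MvPolynomial.aeval z q ≠ 0)
    (j : Fin n) (z v : Fin n → ℝ) (hv : ∀ k, 0 < v k) :
    ∑ k, v k * (MvPolynomial.eval z (MvPolynomial.pderiv k (MvPolynomial.pderiv j q)) *
      MvPolynomial.eval z q - MvPolynomial.eval z (MvPolynomial.pderiv j q) *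
      MvPolynomial.eval z (MvPolynomial.pderiv k q)) ≤ 0 := by
  set a : Fin n → ℂ := fun k => (z k : ℂ) with ha
  set b : Fin n → ℂ := fun k => Complex.I * (v k : ℂ) with hb
  have ev0 : ∀ r : MvPolynomial (Fin n) ℝ, (Ln a b r).eval 0 =
      ((MvPolynomial.eval z r : ℝ) : ℂ) := by
    intro r
    rw [Ln_eval, ← aeval_ofReal']; simp [ha]
  have dv0 : ∀ r : MvPolynomial (Fin n) ℝ, (derivative (Ln a b r)).eval 0 =
      Complex.I * ((∑ k, v k * MvPolynomial.eval z (MvPolynomial.pderiv k r) : ℝ) : ℂ) := by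
    intro r
    rw [Ln_deriv, eval_finsetSum]
    simp only [eval_mul, eval_C, ev0]
    simp only [hb]
    push_cast
    rw [Finset.mul_sum]
    exact Finset.sum_congr rfl fun k _ => by ring
  have hd : ∀ r : MvPolynomial (Fin n) ℝ, HasDerivAt (fun s : ℝ => (Ln a b r).eval (s : ℂ))
      (Complex.I * ((∑ k, v k * MvPolynomial.eval z (MvPolynomial.pderiv k r) : ℝ) : ℂ)) 0 := by
    intro r
    have h := ((Ln a b r).hasDerivAt ((0:ℝ):ℂ)).comp_ofReal
    rw [Complex.ofReal_zero, dv0] at h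
    exact h
  have hm := ((hd (MvPolynomial.pderiv j q)).mul (hd q).star)
  have hh := Complex.imCLM.hasFDerivAt.comp_hasDerivAt (0:ℝ) hm
  set S1 := ∑ k, v k * MvPolynomial.eval z (MvPolynomial.pderiv k (MvPolynomial.pderiv j q)) with hS1
  set S2 := ∑ k, v k * MvPolynomial.eval z (MvPolynomial.pderiv k q) with hS2
  have hgoal : ∑ k, v k * (MvPolynomial.eval z (MvPolynomial.pderiv k (MvPolynomial.pderiv j q)) *
      MvPolynomial.eval z q - MvPolynomial.eval z (MvPolynomial.pderiv j q) *
      MvPolynomial.eval z (MvPolynomial.pderiv k q)) =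
      S1 * MvPolynomial.eval z q - MvPolynomial.eval z (MvPolynomial.pderiv j q) * S2 := by
    rw [hS1, hS2, Finset.sum_mul, Finset.mul_sum, ← Finset.sum_sub_distrib]
    exact Finset.sum_congr rfl fun k _ => by ring
  rw [hgoal]
  have hval : Complex.imCLM (Complex.I * (S1 : ℂ) * star ((Ln a b q).eval (((0:ℝ):ℂ))) +
      (Ln a b (MvPolynomial.pderiv j q)).eval ((0:ℝ):ℂ) * star (Complex.I * (S2 : ℂ))) =
      S1 * MvPolynomial.eval z q - MvPolynomial.eval z (MvPolynomial.pderiv j q) * S2 := by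
    rw [Complex.ofReal_zero, ev0, ev0]
    simp
    try ring
  rw [hval] at hh
  have hlim := hh.tendsto_slope.mono_left (nhdsWithin_mono (0:ℝ)
    (show Set.Ioi (0:ℝ) ⊆ {0}ᶜ from fun x hx => ne_of_gt hx))
  refine le_of_tendsto hlim ?_
  filter_upwards [self_mem_nhdsWithin] with s hs
  have hs' : 0 < s := hs
  rw [slope_def_field]
  apply div_nonpos_of_nonpos_of_nonneg _ (by linarith)
  simp only [Function.comp, Pi.mul_apply, Complex.imCLM_apply, Complex.ofReal_zero, ev0]
  have h1 := im_le q hq j (fun k => a k + b k * s) (by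
    intro k; simp [ha, hb]; exact mul_pos (hv k) hs')
  rw [← Ln_eval, ← Ln_eval] at h1
  simp at h1 ⊢
  linarith

theorem lin_aux {n : ℕ} (F : Fin n → ℝ) (i : Fin n)
    (h : ∀ v : Fin n → ℝ, (∀ k, 0 < v k) → ∑ k, v k * F k ≤ 0) : F i ≤ 0 := by
  have h2 : ∀ e : ℝ, 0 < e → F i + e * ∑ k, F k ≤ 0 := by
    intro e he
    have := h (fun k => (if k = i then 1 else 0) + e) (by
      intro k; split_ifs <;> linarith)
    change ∑ k, ((if k = i then 1 else 0) + e) * F k ≤ 0 at this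
    simpa [add_mul, Finset.sum_add_distrib, ← Finset.mul_sum] using this
  by_contra hc
  push Not at hc
  have h3 := h2 (F i / (2 * (|∑ k, F k| + 1))) (by positivity)
  have h4 : F i / (2 * (|∑ k, F k| + 1)) * (|∑ k, F k| + 1) = F i / 2 := by
    field_simp
  have h5 : 0 < F i / (2 * (|∑ k, F k| + 1)) := by positivity
  generalize ∑ k, F k = T at *
  generalize F i / (2 * (|T| + 1)) = e at *
  have h6 := mul_le_mul_of_nonneg_left (neg_abs_le T) h5.le
  nlinarith

theorem rayleigh {n : ℕ} (q : MvPolynomial (Fin n) ℝ)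
    (hq : ∀ z : Fin n → ℂ, (∀ k, 0 < (z k).im) → MvPolynomial.aeval z q ≠ 0)
    (i j : Fin n) (z : Fin n → ℝ) :
    MvPolynomial.eval z (MvPolynomial.pderiv i (MvPolynomial.pderiv j q)) *
      MvPolynomial.eval z q ≤ MvPolynomial.eval z (MvPolynomial.pderiv j q) *
      MvPolynomial.eval z (MvPolynomial.pderiv i q) := by
  have h := rayleigh_pos q hq j z
  rw [← sub_nonpos]
  set F : Fin n → ℝ := fun k =>
    MvPolynomial.eval z (MvPolynomial.pderiv k (MvPolynomial.pderiv j q)) *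
      MvPolynomial.eval z q - MvPolynomial.eval z (MvPolynomial.pderiv j q) *
      MvPolynomial.eval z (MvPolynomial.pderiv k q) with hF
  change F i ≤ 0
  exact lin_aux F i h

/-- discriminant inequality in degree two -/
theorem disc_ineq {n : ℕ} (q : MvPolynomial (Fin n) ℝ) (hq : RealStable q) (i : Fin n)
    (h3 : MvPolynomial.pderiv i (MvPolynomial.pderiv i (MvPolynomial.pderiv i q)) = 0)
    (w : Fin n → ℝ) :
    2 * MvPolynomial.eval w (MvPolynomial.pderiv i (MvPolynomial.pderiv i q)) *
      MvPolynomial.eval w q ≤ MvPolynomial.eval w (MvPolynomial.pderiv i q) ^ 2 := by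
  have hr := fun x : ℝ => rayleigh q hq i i (w + Pi.single i x)
  have t0 := taylor2 i q h3 w
  have t1 := taylor2 i (MvPolynomial.pderiv i q) (by rw [h3]; simp) w
  have t2 := taylor2 i (MvPolynomial.pderiv i (MvPolynomial.pderiv i q)) (by rw [h3]; simp) w
  simp only [t0, t1, t2, h3, map_zero, mul_zero, add_zero] at hr
  generalize MvPolynomial.eval w q = c at *
  generalize MvPolynomial.eval w (MvPolynomial.pderiv i q) = b at *
  generalize MvPolynomial.eval w (MvPolynomial.pderiv i (MvPolynomial.pderiv i q)) = a at *
  by_cases ha : a = 0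
  · subst ha; nlinarith [sq_nonneg b]
  · have h := hr (-b / a)
    have e : a * (c + -b / a * b + (-b / a) ^ 2 / 2 * a) = a * c - b ^ 2 / 2 := by
      field_simp; ring
    have e2 : b + -b / a * a = 0 := by field_simp; ring
    rw [e, e2] at h
    linarith

theorem quad_pos {a b c : ℝ} (hp : ∀ x : ℝ, 0 ≤ x → 0 < c + x * b + x ^ 2 / 2 * a)
    (hd : 2 * a * c ≤ b ^ 2) : 0 ≤ a ∧ 0 ≤ b := by
  have hc : 0 < c := by simpa using hp 0 le_rfl
  have ha : 0 ≤ a := by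
    by_contra h
    push Not at h
    set x := 1 + 2 * (|b| + c) / (-a) with hx
    have hx1 : 1 ≤ x := by
      have : 0 ≤ 2 * (|b| + c) / (-a) := div_nonneg (by positivity) (by linarith)
      linarith
    have hxa : x * (-a) = -a + 2 * (|b| + c) := by
      rw [hx, add_mul, div_mul_cancel₀ _ (neg_ne_zero.mpr h.ne)]; ring
    have := hp x (by linarith)
    have hb := le_abs_self b
    nlinarith [mul_le_mul_of_nonneg_left hb (by linarith : 0 ≤ x),
      mul_nonneg hc.le (by linarith : 0 ≤ x - 1), mul_pos (by linarith : 0 < x) (by linarith : 0 < -a)]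
  refine ⟨ha, ?_⟩
  by_contra h
  push Not at h
  rcases ha.eq_or_lt with h0 | h0
  · have := hp (-c / b) (div_nonneg_of_nonpos (by linarith) h.le)
    rw [← h0] at this
    rw [div_mul_cancel₀ _ h.ne] at this
    simp at this
  · have := hp (-b / a) (div_nonneg (by linarith) h0.le)
    have e : a * (c + -b / a * b + (-b / a) ^ 2 / 2 * a) = a * c - b ^ 2 / 2 := by
      field_simp; ring
    have := mul_pos h0 this
    linarith

theorem main_alg {A B C dA dB dC : ℝ} (hC : 0 < C) (hB : 0 < B) (hA : 0 ≤ A)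
    (hd : 2 * A * C ≤ B ^ 2)
    (hR : ∀ x : ℝ, (dB + x * dA) * (C + x * B + x ^ 2 / 2 * A) ≤
      (dC + x * dB + x ^ 2 / 2 * dA) * (B + x * A)) :
    (dB + -(C / (2 * B)) * dA) / (B + -(C / (2 * B)) * A) ≤ dC / C := by
  have hden : 0 < 2 * B ^ 2 - A * C := by nlinarith [sq_pos_of_pos hB, mul_nonneg hA hC.le]
  have e1 : (dB + -(C / (2 * B)) * dA) / (B + -(C / (2 * B)) * A) =
      (2 * B * dB - dA * C) / (2 * B ^ 2 - A * C) := by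
    have hne : B + -(C / (2 * B)) * A ≠ 0 := by
      have : (B + -(C / (2 * B)) * A) * (2 * B) = 2 * B ^ 2 - A * C := by field_simp; ring
      intro h0; rw [h0] at this; linarith
    rw [div_eq_div_iff hne hden.ne']
    field_simp; ring
  rw [e1, div_le_div_iff₀ hden hC]
  set r := Real.sqrt (A * C / 2) with hr
  have hr0 : 0 ≤ r := Real.sqrt_nonneg _
  have hr2 : r ^ 2 = A * C / 2 := Real.sq_sqrt (by positivity)
  have hBr : 0 < B + r := by linarith
  have h := hR (-C / (B + r))
  set x := -C / (B + r) with hx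
  have hxr : x * (B + r) = -C := by rw [hx]; field_simp
  -- R(x) * C = (C - x^2 A / 2) * c + ...
  have hxx : x ^ 2 * (B + r) ^ 2 = C ^ 2 := by
    have := congrArg (· ^ 2) hxr
    nlinarith [this]
  have hR' : 0 ≤ (A * dB - dA * B) / 2 * x ^ 2 + (A * dC - dA * C) * x + (B * dC - dB * C) := by
    nlinarith [h]
  have h2 := mul_nonneg hR' (by positivity : 0 ≤ (B + r) ^ 2)
  have h3 : ((A * dB - dA * B) / 2 * x ^ 2 + (A * dC - dA * C) * x + (B * dC - dB * C))
      * (B + r) ^ 2 = (A * dB - dA * B) / 2 * C ^ 2 - (A * dC - dA * C) * C * (B + r) +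
      (B * dC - dB * C) * (B + r) ^ 2 := by
    linear_combination (A * dB - dA * B) / 2 * hxx + (A * dC - dA * C) * (B + r) * hxr
  rw [h3] at h2
  have h4 : (A * dB - dA * B) / 2 * C ^ 2 - (A * dC - dA * C) * C * (B + r) +
      (B * dC - dB * C) * (B + r) ^ 2 =
      (B / 2 + r) * (dC * (2 * B ^ 2 - A * C) - (2 * B * dB - dA * C) * C) := by
    linear_combination (B * dC - dB * C) * hr2
  rw [h4] at h2
  have := nonneg_of_mul_nonneg_right h2 (by linarith)
  linarith

theorem main_pos {n : ℕ} (q : MvPolynomial (Fin n) ℝ) (hq : RealStable q)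
    (i : Fin n) (hdeg : MvPolynomial.degreeOf i q ≤ 2)
    (z : Fin n → ℝ) (hz : AboveRoots q z) (hΦ : 0 < Phi q i z)
    (hpos : 0 < MvPolynomial.eval z q) :
    AboveRoots (MvPolynomial.pderiv i q) (z - Pi.single i (1/(2 * Phi q i z))) ∧
    ∀ j : Fin n,
      Phi (MvPolynomial.pderiv i q) j (z - Pi.single i (1/(2 * Phi q i z))) ≤ Phi q j z := by
  have h3 := pd3 i q hdeg
  have lev : ∀ (t : Fin n → ℝ) (p : MvPolynomial (Fin n) ℝ) (s : ℝ),
      (Ln z t p).eval s = MvPolynomial.eval (z + fun k => t k * s) p := by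
    intro t p s
    rw [Ln_eval, MvPolynomial.aeval_eq_eval]; rfl
  -- positivity on the orthant
  have hposP : ∀ t : Fin n → ℝ, (∀ k, 0 ≤ t k) → 0 < MvPolynomial.eval (z + t) q := by
    intro t ht
    by_contra hc
    push Not at hc
    have hcont : ContinuousOn (fun s : ℝ => (Ln z t q).eval s) (Set.Icc 0 1) :=
      (Ln z t q).continuous.continuousOn
    have := intermediate_value_Icc' (zero_le_one) hcont
    have hmem : (0:ℝ) ∈ Set.Icc ((Ln z t q).eval 1) ((Ln z t q).eval 0) := by
      rw [lev, lev]
      constructor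
      · simpa using hc
      · have : (z + fun k => t k * 0) = z := by ext; simp
        rw [this]; exact hpos.le
    obtain ⟨s, hs, hs0⟩ := this hmem
    simp only [lev] at hs0
    exact hz _ (fun k => mul_nonneg (ht k) hs.1) hs0
  have hAB : ∀ t : Fin n → ℝ, (∀ k, 0 ≤ t k) →
      0 ≤ MvPolynomial.eval (z + t) (MvPolynomial.pderiv i (MvPolynomial.pderiv i q)) ∧
      0 ≤ MvPolynomial.eval (z + t) (MvPolynomial.pderiv i q) := by
    intro t ht
    refine quad_pos (c := MvPolynomial.eval (z + t) q) ?_ (disc_ineq q hq i h3 (z + t))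
    intro x hx
    rw [← taylor2 i q h3, add_assoc]
    apply hposP
    intro k
    by_cases hk : k = i
    · subst hk; simp; linarith [ht k]
    · simpa [hk] using ht k
  have hBz : 0 < MvPolynomial.eval z (MvPolynomial.pderiv i q) := by
    unfold Phi at hΦ
    exact (div_pos_iff_of_pos_right hpos).mp hΦ
  have hAz := (hAB 0 (by simp)).1
  rw [add_zero] at hAz
  -- monotonicity of the barrier
  have hmono : ∀ t : Fin n → ℝ, (∀ k, 0 ≤ t k) → AntitoneOn (fun s : ℝ =>
      (Ln z t (MvPolynomial.pderiv i q)).eval s / (Ln z t q).eval s) (Set.Ici 0) := by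
    intro t ht
    have hP : ∀ s : ℝ, 0 ≤ s → 0 < (Ln z t q).eval s := by
      intro s hs
      rw [lev]; exact hposP _ (fun k => mul_nonneg (ht k) hs)
    refine antitoneOn_of_deriv_nonpos (convex_Ici 0) ?_ ?_ ?_
    · exact ContinuousOn.div (Polynomial.continuous _).continuousOn
        (Polynomial.continuous _).continuousOn (fun s hs => (hP s hs).ne')
    · intro s hs
      rw [interior_Ici] at hs
      exact (((Polynomial.differentiable _) s).div ((Polynomial.differentiable _) s)
        (hP s (le_of_lt hs)).ne').differentiableWithinAt
    · intro s hs
      rw [interior_Ici] at hs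
      have hs' : 0 < s := hs
      have hder := ((Ln z t (MvPolynomial.pderiv i q)).hasDerivAt s).div
        ((Ln z t q).hasDerivAt s) (hP s hs'.le).ne'
      have hder2 := hder.deriv
      change deriv (fun s : ℝ =>
        (Ln z t (MvPolynomial.pderiv i q)).eval s / (Ln z t q).eval s) s = _ at hder2
      rw [hder2]
      apply div_nonpos_of_nonpos_of_nonneg _ (sq_nonneg _)
      rw [Ln_deriv, Ln_deriv, eval_finsetSum, eval_finsetSum, Finset.sum_mul, Finset.mul_sum,
        ← Finset.sum_sub_distrib]
      apply Finset.sum_nonpos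
      intro k _
      simp only [eval_mul, eval_C, lev]
      have hr := rayleigh q hq k i (z + fun k => t k * s)
      nlinarith [mul_le_mul_of_nonneg_left hr (ht k)]
  have hev1 : ∀ (t : Fin n → ℝ) p, (Ln z t p).eval 1 = MvPolynomial.eval (z + t) p := by
    intro t p; rw [lev]; simp
  have hev0 : ∀ (t : Fin n → ℝ) p, (Ln z t p).eval 0 = MvPolynomial.eval z p := by
    intro t p; rw [lev]
    have : (z + fun k => t k * 0) = z := by ext; simp
    rw [this]
  -- strict positivity of the derivative on the orthant
  have hBpos : ∀ t : Fin n → ℝ, (∀ k, 0 ≤ t k) →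
      0 < MvPolynomial.eval (z + t) (MvPolynomial.pderiv i q) := by
    intro t ht
    refine lt_of_le_of_ne (hAB t ht).2 fun h0 => ?_
    have hzero : ∀ s : ℝ, 1 ≤ s → (Ln z t (MvPolynomial.pderiv i q)).eval s = 0 := by
      intro s hs
      have hm := hmono t ht (show (1:ℝ) ∈ Set.Ici 0 by simp)
        (show s ∈ Set.Ici 0 from le_trans zero_le_one hs) hs
      simp only [hev1, ← h0, zero_div] at hm
      have hnn : ∀ k, 0 ≤ t k * s := fun k => mul_nonneg (ht k) (by linarith)
      have hp := hposP (fun k => t k * s) hnn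
      have hb := (hAB (fun k => t k * s) hnn).2
      rw [lev, lev] at hm
      rw [lev]
      have hm' : MvPolynomial.eval (z + fun k => t k * s) (MvPolynomial.pderiv i q) ≤ 0 := by
        by_contra hc
        push Not at hc
        linarith [div_pos hc hp]
      exact le_antisymm hm' hb
    have hpoly : Ln z t (MvPolynomial.pderiv i q) = 0 := by
      apply Polynomial.eq_zero_of_infinite_isRoot
      exact (Set.Ici_infinite (1:ℝ)).mono fun s hs => hzero s hs
    have := hev0 t (MvPolynomial.pderiv i q)
    rw [hpoly] at this
    simp at this
    linarith
  have hδ : 1 / (2 * Phi q i z) = MvPolynomial.eval z q /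
      (2 * MvPolynomial.eval z (MvPolynomial.pderiv i q)) := by
    unfold Phi
    field_simp
  rw [hδ]
  set δ := MvPolynomial.eval z q /
      (2 * MvPolynomial.eval z (MvPolynomial.pderiv i q)) with hδd
  have hsub : z - Pi.single i δ = z + Pi.single i (-δ) := by
    rw [sub_eq_add_neg, ← Pi.single_neg]
  rw [hsub]
  constructor
  · intro t ht
    have hre : z + Pi.single i (-δ) + t = (z + t) + Pi.single i (-δ) := by
      abel
    rw [hre, taylor2 i _ (by rw [h3]; simp), h3]
    have hm := hmono t ht (show (0:ℝ) ∈ Set.Ici 0 by simp)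
        (show (1:ℝ) ∈ Set.Ici 0 by simp) zero_le_one
    simp only [hev1, hev0] at hm
    have hB1 := hBpos t ht
    have hC1 := hposP t ht
    have hA1 := (hAB t ht).1
    have hd1 := disc_ineq q hq i h3 (z + t)
    rw [div_le_div_iff₀ hC1 hpos] at hm
    simp only [map_zero, mul_zero, add_zero]
    apply ne_of_gt
    have hδ0 : 0 < δ := by positivity
    have hδ2 : δ * (2 * MvPolynomial.eval z (MvPolynomial.pderiv i q)) = MvPolynomial.eval z q := by
      rw [hδd]; field_simp
    generalize MvPolynomial.eval (z + t) q = c1 at *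
    generalize MvPolynomial.eval (z + t) (MvPolynomial.pderiv i q) = b1 at *
    generalize MvPolynomial.eval (z + t) (MvPolynomial.pderiv i (MvPolynomial.pderiv i q)) = a1 at *
    generalize MvPolynomial.eval z q = c at *
    generalize MvPolynomial.eval z (MvPolynomial.pderiv i q) = b at *
    have hδb : 2 * δ * b1 ≤ c1 := by
      have : (2 * δ * b1) * b ≤ c1 * b := by
        rw [← hδ2] at hm; nlinarith
      exact le_of_mul_le_mul_right this hBz
    have : 0 < (b1 + -δ * a1) * b1 := by
      nlinarith [mul_le_mul_of_nonneg_left hδb hA1, sq_pos_of_pos hB1, mul_nonneg hA1 hC1.le]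
    exact pos_of_mul_pos_left this hB1.le
  · intro j
    have comm3 : ∀ p : MvPolynomial (Fin n) ℝ, MvPolynomial.pderiv i (MvPolynomial.pderiv j p) =
      MvPolynomial.pderiv j (MvPolynomial.pderiv i p) := fun p => pd_comm i j p
    have hj3 : MvPolynomial.pderiv i (MvPolynomial.pderiv i (MvPolynomial.pderiv i
        (MvPolynomial.pderiv j q))) = 0 := by
      rw [comm3, comm3, comm3, h3]; simp
    have hd := disc_ineq q hq i h3 z
    unfold Phi
    have tij := taylor2 i (MvPolynomial.pderiv i (MvPolynomial.pderiv j q))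
      (by rw [hj3]; simp) z
    have ti := taylor2 i (MvPolynomial.pderiv i q) (by rw [h3]; simp) z
    rw [← comm3 q, tij, ti, h3, hj3]
    simp only [map_zero, mul_zero, add_zero]
    refine main_alg hpos hBz hAz hd ?_
    intro x
    have hr := rayleigh q hq i j (z + Pi.single i x)
    rw [tij, ti, taylor2 i q h3, taylor2 i _ hj3, h3, hj3] at hr
    simpa using hr

/-- Degree-2 barrier shift: if `q` is real stable of degree at most 2 in `zᵢ`, `z` is above
the roots of `q` and `Φ_q^i(z) > 0`, then with `δ = 1/(2Φ_q^i(z))` the point `z - δeᵢ` is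
above the roots of `∂ᵢq` and `Φ_{∂ᵢq}^j(z - δeᵢ) ≤ Φ_q^j(z)` for every `j`. -/
theorem barrier_shift_deg_two {n : ℕ} (q : MvPolynomial (Fin n) ℝ) (hq : RealStable q)
    (i : Fin n) (hdeg : MvPolynomial.degreeOf i q ≤ 2)
    (z : Fin n → ℝ) (hz : AboveRoots q z) (hΦ : 0 < Phi q i z) :
    AboveRoots (MvPolynomial.pderiv i q) (z - Pi.single i (1/(2 * Phi q i z))) ∧
    ∀ j : Fin n,
      Phi (MvPolynomial.pderiv i q) j (z - Pi.single i (1/(2 * Phi q i z))) ≤ Phi q j z := by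
  have hne : MvPolynomial.eval z q ≠ 0 := by simpa using hz 0 (by simp)
  rcases lt_or_gt_of_ne hne with h | h
  · have hphi : ∀ (p : MvPolynomial (Fin n) ℝ) j w, Phi (-p) j w = Phi p j w := by
      intro p j w; simp [Phi, neg_div_neg_eq]
    have := main_pos (-q) (by intro w hw; simpa using hq w hw) i
      (by rwa [MvPolynomial.degreeOf_neg]) z (by intro t ht; simpa using hz t ht)
      (by rwa [hphi]) (by simpa using h)
    simp only [map_neg, hphi] at this
    refine ⟨?_, this.2⟩
    intro t ht
    simpa using this.1 t ht
  · exact main_pos q hq i hdeg z hz hΦ h
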